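/- arXiv:2501.00122 — 11 statements merged into one kernel-verified Lean document; each statement's English description precedes it below -/
import Mathlib

section
/- Let (C₁, ε₁) and (C₂, ε₂) be counital objects in a monoidal category 𝒜. The following are equivalent: (1L) C₁ is a retract of X ⊗ C₂ for some object X of 𝒜; (1R) C₁ is a retract of C₂ ⊗ X for some object X of 𝒜; (2L) the morphism (C₁ ◁ ε₂) ≫ ρ_{C₁} : C₁ ⊗ C₂ ⟶ C₁ is a split epimorphism; (2R) the morphism (ε₂ ▷ C₁) ≫ λ_{C₁} : C₂ ⊗ C₁ ⟶ C₁ is a split epimorphism; (3) there exists a morphism θ : C₁ ⟶ C₂ with θ ≫ ε₂ = ε₁. -/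
open CategoryTheory MonoidalCategory

/-- Theorem A.2 (counital objects): for counital objects `(C₁, ε₁)` and `(C₂, ε₂)` in a
monoidal category `𝒜`, the five conditions (1L), (1R), (2L), (2R), (3) are equivalent. -/
theorem counital_object_tfae {𝒜 : Type*} [Category 𝒜] [MonoidalCategory 𝒜]
    (C₁ C₂ : 𝒜) (ε₁ : C₁ ⟶ 𝟙_ 𝒜) (ε₂ : C₂ ⟶ 𝟙_ 𝒜)
    (h₁L : IsSplitEpi ((ε₁ ▷ C₁) ≫ (λ_ C₁).hom))
    (h₁R : IsSplitEpi ((C₁ ◁ ε₁) ≫ (ρ_ C₁).hom))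
    (h₂L : IsSplitEpi ((ε₂ ▷ C₂) ≫ (λ_ C₂).hom))
    (h₂R : IsSplitEpi ((C₂ ◁ ε₂) ≫ (ρ_ C₂).hom)) :
    List.TFAE [
      -- (1L) C₁ is a retract of X ⊗ C₂ for some X
      ∃ (X : 𝒜) (i : C₁ ⟶ X ⊗ C₂) (r : X ⊗ C₂ ⟶ C₁), i ≫ r = 𝟙 C₁,
      -- (1R) C₁ is a retract of C₂ ⊗ X for some X
      ∃ (X : 𝒜) (i : C₁ ⟶ C₂ ⊗ X) (r : C₂ ⊗ X ⟶ C₁), i ≫ r = 𝟙 C₁,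
      -- (2L)
      IsSplitEpi ((C₁ ◁ ε₂) ≫ (ρ_ C₁).hom),
      -- (2R)
      IsSplitEpi ((ε₂ ▷ C₁) ≫ (λ_ C₁).hom),
      -- (3)
      ∃ θ : C₁ ⟶ C₂, θ ≫ ε₂ = ε₁] := by
  tfae_have 3 → 1 := by
    rintro ⟨⟨s, hs⟩⟩
    exact ⟨C₁, s, _, hs⟩
  tfae_have 4 → 2 := by
    rintro ⟨⟨s, hs⟩⟩
    exact ⟨C₁, s, _, hs⟩
  tfae_have 1 → 3 := by
    rintro ⟨X, i, r, h⟩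
    obtain ⟨⟨s, hs⟩⟩ := h₂R
    refine ⟨⟨i ≫ X ◁ s ≫ (α_ X C₂ C₂).inv ≫ r ▷ C₂, ?_⟩⟩
    have e : r ▷ C₂ ≫ C₁ ◁ ε₂ ≫ (ρ_ C₁).hom = (X ⊗ C₂) ◁ ε₂ ≫ (ρ_ (X ⊗ C₂)).hom ≫ r := by
      rw [← whisker_exchange_assoc, rightUnitor_naturality]
    have e2 : (α_ X C₂ C₂).inv ≫ (X ⊗ C₂) ◁ ε₂ ≫ (ρ_ (X ⊗ C₂)).hom
        = X ◁ (C₂ ◁ ε₂ ≫ (ρ_ C₂).hom) := by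
      simp
    have e3 : X ◁ s ≫ X ◁ (C₂ ◁ ε₂ ≫ (ρ_ C₂).hom) = 𝟙 _ := by
      rw [← whiskerLeft_comp, hs, whiskerLeft_id]
    simp only [Category.assoc]
    rw [e, reassoc_of% e2, reassoc_of% e3, h]
  tfae_have 2 → 4 := by
    rintro ⟨X, i, r, h⟩
    obtain ⟨⟨s, hs⟩⟩ := h₂L
    refine ⟨⟨i ≫ s ▷ X ≫ (α_ C₂ C₂ X).hom ≫ C₂ ◁ r, ?_⟩⟩
    have e : C₂ ◁ r ≫ ε₂ ▷ C₁ ≫ (λ_ C₁).hom = ε₂ ▷ (C₂ ⊗ X) ≫ (λ_ (C₂ ⊗ X)).hom ≫ r := by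
      rw [whisker_exchange_assoc, leftUnitor_naturality]
    have e2 : (α_ C₂ C₂ X).hom ≫ ε₂ ▷ (C₂ ⊗ X) ≫ (λ_ (C₂ ⊗ X)).hom
        = (ε₂ ▷ C₂ ≫ (λ_ C₂).hom) ▷ X := by
      simp
    have e3 : s ▷ X ≫ (ε₂ ▷ C₂ ≫ (λ_ C₂).hom) ▷ X = 𝟙 _ := by
      rw [← comp_whiskerRight, hs, id_whiskerRight]
    simp only [Category.assoc]
    rw [e, reassoc_of% e2, reassoc_of% e3, h]
  tfae_have 3 → 5 := by
    rintro ⟨⟨s, hs⟩⟩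
    refine ⟨s ≫ ε₁ ▷ C₂ ≫ (λ_ C₂).hom, ?_⟩
    have e : (ε₁ ▷ C₂ ≫ (λ_ C₂).hom) ≫ ε₂ = (C₁ ◁ ε₂ ≫ (ρ_ C₁).hom) ≫ ε₁ := by
      rw [Category.assoc, Category.assoc, ← leftUnitor_naturality, ← rightUnitor_naturality,
        whisker_exchange_assoc, unitors_equal]
    rw [Category.assoc, e, ← Category.assoc, hs, Category.id_comp]
  tfae_have 4 → 5 := by
    rintro ⟨⟨s, hs⟩⟩
    refine ⟨s ≫ C₂ ◁ ε₁ ≫ (ρ_ C₂).hom, ?_⟩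
    have e : (C₂ ◁ ε₁ ≫ (ρ_ C₂).hom) ≫ ε₂ = (ε₂ ▷ C₁ ≫ (λ_ C₁).hom) ≫ ε₁ := by
      rw [Category.assoc, Category.assoc, ← leftUnitor_naturality, ← rightUnitor_naturality,
        whisker_exchange_assoc, unitors_equal]
    rw [Category.assoc, e, ← Category.assoc, hs, Category.id_comp]
  tfae_have 5 → 3 := by
    rintro ⟨θ, rfl⟩
    obtain ⟨⟨s, hs⟩⟩ := h₁R
    exact ⟨⟨s ≫ C₁ ◁ θ, by simpa using hs⟩⟩
  tfae_have 5 → 4 := by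
    rintro ⟨θ, rfl⟩
    obtain ⟨⟨s, hs⟩⟩ := h₁L
    exact ⟨⟨s ≫ θ ▷ C₁, by simpa using hs⟩⟩
  tfae_finish
end

section
/- Let P ⟶ε 𝟙 ⟶η Q ⟶δ P⟦1⟧ be a distinguished triangle in 𝒜. The following are equivalent: (1) (P, ε) is a counital idempotent; (2) (Q, η) is a unital idempotent; (3) P ⊗ Q ≅ 0 and Q ⊗ P ≅ 0. -/
open CategoryTheory Category Limits MonoidalCategory Pretriangulated ZeroObject

/-- Proposition (complementary idempotents): given a distinguished triangle
`P ⟶ε 𝟙 ⟶η Q ⟶δ P⟦1⟧` in a monoidal pretriangulated category `𝒜`, the following are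
equivalent: (1) `(P, ε)` is a counital idempotent; (2) `(Q, η)` is a unital idempotent;
(3) `P ⊗ Q ≅ 0` and `Q ⊗ P ≅ 0`. -/
theorem complementary_idempotents_tfae {𝒜 : Type*} [Category 𝒜] [MonoidalCategory 𝒜]
    [HasZeroObject 𝒜] [Preadditive 𝒜] [HasShift 𝒜 ℤ]
    [∀ n : ℤ, (shiftFunctor 𝒜 n).Additive] [Pretriangulated 𝒜]
    [∀ X : 𝒜, (tensorLeft X).Additive] [∀ X : 𝒜, (tensorRight X).Additive]
    [∀ X : 𝒜, (tensorLeft X).CommShift ℤ] [∀ X : 𝒜, (tensorRight X).CommShift ℤ]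
    [∀ X : 𝒜, (tensorLeft X).IsTriangulated] [∀ X : 𝒜, (tensorRight X).IsTriangulated]
    (P Q : 𝒜) (ε : P ⟶ 𝟙_ 𝒜) (η : 𝟙_ 𝒜 ⟶ Q) (δ : Q ⟶ P⟦(1 : ℤ)⟧)
    (hT : Triangle.mk ε η δ ∈ distTriang 𝒜) :
    List.TFAE [
      -- (1) (P, ε) is a counital idempotent
      IsIso ((ε ▷ P) ≫ (λ_ P).hom) ∧ IsIso ((P ◁ ε) ≫ (ρ_ P).hom),
      -- (2) (Q, η) is a unital idempotent
      IsIso ((λ_ Q).inv ≫ (η ▷ Q)) ∧ IsIso ((ρ_ Q).inv ≫ (Q ◁ η)),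
      -- (3) P ⊗ Q ≅ 0 and Q ⊗ P ≅ 0
      Nonempty (P ⊗ Q ≅ 0) ∧ Nonempty (Q ⊗ P ≅ 0)] := by
  have hL : ∀ X : 𝒜, (tensorLeft X).mapTriangle.obj (Triangle.mk ε η δ) ∈ distTriang 𝒜 :=
    fun X => (tensorLeft X).map_distinguished _ hT
  have hR : ∀ X : 𝒜, (tensorRight X).mapTriangle.obj (Triangle.mk ε η δ) ∈ distTriang 𝒜 :=
    fun X => (tensorRight X).map_distinguished _ hT
  have a1 : IsZero (Q ⊗ P) ↔ IsIso (ε ▷ P) := Triangle.isZero₃_iff_isIso₁ _ (hR P)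
  have a2 : IsZero (P ⊗ Q) ↔ IsIso (P ◁ ε) := Triangle.isZero₃_iff_isIso₁ _ (hL P)
  have b1 : IsZero (P ⊗ Q) ↔ IsIso (η ▷ Q) := Triangle.isZero₁_iff_isIso₂ _ (hR Q)
  have b2 : IsZero (Q ⊗ P) ↔ IsIso (Q ◁ η) := Triangle.isZero₁_iff_isIso₂ _ (hL Q)
  have z : ∀ X : 𝒜, Nonempty (X ≅ 0) ↔ IsZero X := fun X =>
    ⟨fun ⟨e⟩ => (isZero_zero 𝒜).of_iso e, fun h => ⟨h.isoZero⟩⟩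
  rw [isIso_comp_right_iff, isIso_comp_right_iff, isIso_comp_left_iff, isIso_comp_left_iff,
    z, z, ← a1, ← a2, ← b1, ← b2]
  tfae_have 1 ↔ 3 := and_comm
  tfae_have 2 ↔ 3 := Iff.rfl
  tfae_finish
end

section
/- Let (P, ε) be a counital idempotent and (Q, η) a unital idempotent in 𝒜 which are complementary, i.e., there is a distinguished triangle P ⟶ε 𝟙 ⟶η Q ⟶ P⟦1⟧. Then for every object X of 𝒜: (i) P ⊗ X ≅ X if and only if Q ⊗ X ≅ 0; (ii) Q ⊗ X ≅ X if and only if P ⊗ X ≅ 0; and the analogous equivalences hold with X on the left: X ⊗ P ≅ X iff X ⊗ Q ≅ 0, and X ⊗ Q ≅ X iff X ⊗ P ≅ 0. -/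
open CategoryTheory Category Limits MonoidalCategory Pretriangulated ZeroObject

/-- Lemma (properties of complementary idempotents, parts (2) and (3)): if `(P, ε)` is a
counital idempotent and `(Q, η)` a unital idempotent which are complementary, then for every
object `X`: `P ⊗ X ≅ X` iff `Q ⊗ X ≅ 0`; `Q ⊗ X ≅ X` iff `P ⊗ X ≅ 0`; and similarly
with `X` on the left. -/
theorem complementary_idempotents_kill {𝒜 : Type*} [Category 𝒜] [MonoidalCategory 𝒜]
    [HasZeroObject 𝒜] [Preadditive 𝒜] [HasShift 𝒜 ℤ]
    [∀ n : ℤ, (shiftFunctor 𝒜 n).Additive] [Pretriangulated 𝒜]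
    [∀ X : 𝒜, (tensorLeft X).Additive] [∀ X : 𝒜, (tensorRight X).Additive]
    [∀ X : 𝒜, (tensorLeft X).CommShift ℤ] [∀ X : 𝒜, (tensorRight X).CommShift ℤ]
    [∀ X : 𝒜, (tensorLeft X).IsTriangulated] [∀ X : 𝒜, (tensorRight X).IsTriangulated]
    (P Q : 𝒜) (ε : P ⟶ 𝟙_ 𝒜) (η : 𝟙_ 𝒜 ⟶ Q) (δ : Q ⟶ P⟦(1 : ℤ)⟧)
    (hT : Triangle.mk ε η δ ∈ distTriang 𝒜)
    (hP : IsIso ((ε ▷ P) ≫ (λ_ P).hom) ∧ IsIso ((P ◁ ε) ≫ (ρ_ P).hom))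
    (hQ : IsIso ((λ_ Q).inv ≫ (η ▷ Q)) ∧ IsIso ((ρ_ Q).inv ≫ (Q ◁ η))) :
    ∀ X : 𝒜,
      (Nonempty (P ⊗ X ≅ X) ↔ Nonempty (Q ⊗ X ≅ 0)) ∧
      (Nonempty (Q ⊗ X ≅ X) ↔ Nonempty (P ⊗ X ≅ 0)) ∧
      (Nonempty (X ⊗ P ≅ X) ↔ Nonempty (X ⊗ Q ≅ 0)) ∧
      (Nonempty (X ⊗ Q ≅ X) ↔ Nonempty (X ⊗ P ≅ 0)) := by
  have hL : ∀ X : 𝒜, (tensorLeft X).mapTriangle.obj (Triangle.mk ε η δ) ∈ distTriang 𝒜 :=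
    fun X => (tensorLeft X).map_distinguished _ hT
  have hR : ∀ X : 𝒜, (tensorRight X).mapTriangle.obj (Triangle.mk ε η δ) ∈ distTriang 𝒜 :=
    fun X => (tensorRight X).map_distinguished _ hT
  have hL3 : ∀ X : 𝒜, IsZero (X ⊗ Q) ↔ IsIso (X ◁ ε) :=
    fun X => Triangle.isZero₃_iff_isIso₁ _ (hL X)
  have hR3 : ∀ X : 𝒜, IsZero (Q ⊗ X) ↔ IsIso (ε ▷ X) :=
    fun X => Triangle.isZero₃_iff_isIso₁ _ (hR X)
  have hL1 : ∀ X : 𝒜, IsZero (X ⊗ P) ↔ IsIso (X ◁ η) :=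
    fun X => Triangle.isZero₁_iff_isIso₂ _ (hL X)
  have hR1 : ∀ X : 𝒜, IsZero (P ⊗ X) ↔ IsIso (η ▷ X) :=
    fun X => Triangle.isZero₁_iff_isIso₂ _ (hR X)
  have hQP : IsZero (Q ⊗ P) := by
    rw [hR3]
    have := hP.1
    exact IsIso.of_isIso_comp_right _ (λ_ P).hom
  have hPQ : IsZero (P ⊗ Q) := by
    rw [hL3]
    have := hP.2
    exact IsIso.of_isIso_comp_right _ (ρ_ P).hom
  have zl : ∀ X Y : 𝒜, IsZero Y → IsZero (X ⊗ Y) :=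
    fun X Y h => (tensorLeft X).map_isZero h
  have zr : ∀ X Y : 𝒜, IsZero Y → IsZero (Y ⊗ X) :=
    fun X Y h => (tensorRight X).map_isZero h
  have z0 : ∀ Y : 𝒜, Nonempty (Y ≅ 0) ↔ IsZero Y :=
    fun Y => ⟨fun ⟨e⟩ => (isZero_zero 𝒜).of_iso e, fun h => ⟨h.isoZero⟩⟩
  intro X
  simp only [z0]
  refine ⟨⟨?_, ?_⟩, ⟨?_, ?_⟩, ⟨?_, ?_⟩, ⟨?_, ?_⟩⟩
  · rintro ⟨e⟩
    exact (zr X _ hQP).of_iso (whiskerLeftIso Q e.symm ≪≫ (α_ Q P X).symm)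
  · intro h
    have := (hR3 X).1 h
    exact ⟨asIso (ε ▷ X) ≪≫ λ_ X⟩
  · rintro ⟨e⟩
    exact (zr X _ hPQ).of_iso (whiskerLeftIso P e.symm ≪≫ (α_ P Q X).symm)
  · intro h
    have := (hR1 X).1 h
    exact ⟨(asIso (η ▷ X)).symm ≪≫ λ_ X⟩
  · rintro ⟨e⟩
    exact (zl X _ hPQ).of_iso (whiskerRightIso e.symm Q ≪≫ α_ X P Q)
  · intro h
    have := (hL3 X).1 h
    exact ⟨asIso (X ◁ ε) ≪≫ ρ_ X⟩
  · rintro ⟨e⟩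
    exact (zl X _ hQP).of_iso (whiskerRightIso e.symm P ≪≫ α_ X Q P)
  · intro h
    have := (hL1 X).1 h
    exact ⟨(asIso (X ◁ η)).symm ≪≫ ρ_ X⟩
end

section
/- Let (P₁, ε₁, Q₁, η₁) and (P₂, ε₂, Q₂, η₂) be two complementary pairs of idempotents in 𝒜, i.e., for i = 1, 2 there is a distinguished triangle Pᵢ ⟶εᵢ 𝟙 ⟶ηᵢ Qᵢ ⟶ Pᵢ⟦1⟧ with (Pᵢ, εᵢ) counital and (Qᵢ, ηᵢ) unital. Then P₁ ≅ P₂ if and only if Q₁ ≅ Q₂. -/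
open CategoryTheory Category Limits MonoidalCategory Pretriangulated ZeroObject

section helpers

variable {𝒜 : Type*} [Category 𝒜] [MonoidalCategory 𝒜]
    [HasZeroObject 𝒜] [Preadditive 𝒜] [HasShift 𝒜 ℤ]
    [∀ n : ℤ, (shiftFunctor 𝒜 n).Additive] [Pretriangulated 𝒜]

lemma left_zero_iff [∀ X : 𝒜, (tensorLeft X).CommShift ℤ]
    [∀ X : 𝒜, (tensorLeft X).IsTriangulated] {P Q : 𝒜} {ε : P ⟶ 𝟙_ 𝒜} {η : 𝟙_ 𝒜 ⟶ Q}
    {δ : Q ⟶ P⟦(1 : ℤ)⟧} (hT : Triangle.mk ε η δ ∈ distTriang 𝒜) (X : 𝒜) :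
    (IsZero (X ⊗ Q) ↔ IsIso (X ◁ ε)) ∧ (IsZero (X ⊗ P) ↔ IsIso (X ◁ η)) :=
  have h := (tensorLeft X).map_distinguished _ hT
  ⟨Triangle.isZero₃_iff_isIso₁ _ h, Triangle.isZero₁_iff_isIso₂ _ h⟩

lemma right_zero_iff [∀ X : 𝒜, (tensorRight X).CommShift ℤ]
    [∀ X : 𝒜, (tensorRight X).IsTriangulated] {P Q : 𝒜} {ε : P ⟶ 𝟙_ 𝒜} {η : 𝟙_ 𝒜 ⟶ Q}
    {δ : Q ⟶ P⟦(1 : ℤ)⟧} (hT : Triangle.mk ε η δ ∈ distTriang 𝒜) (X : 𝒜) :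
    (IsZero (Q ⊗ X) ↔ IsIso (ε ▷ X)) ∧ (IsZero (P ⊗ X) ↔ IsIso (η ▷ X)) :=
  have h := (tensorRight X).map_distinguished _ hT
  ⟨Triangle.isZero₃_iff_isIso₁ _ h, Triangle.isZero₁_iff_isIso₂ _ h⟩

end helpers

/-- Lemma (properties of complementary idempotents, part (4)): given two complementary pairs
of idempotents `(Pᵢ, εᵢ, Qᵢ, ηᵢ)`, we have `P₁ ≅ P₂` iff `Q₁ ≅ Q₂`. -/
theorem complementary_idempotents_iso_iff {𝒜 : Type*} [Category 𝒜] [MonoidalCategory 𝒜]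
    [HasZeroObject 𝒜] [Preadditive 𝒜] [HasShift 𝒜 ℤ]
    [∀ n : ℤ, (shiftFunctor 𝒜 n).Additive] [Pretriangulated 𝒜]
    [∀ X : 𝒜, (tensorLeft X).Additive] [∀ X : 𝒜, (tensorRight X).Additive]
    [∀ X : 𝒜, (tensorLeft X).CommShift ℤ] [∀ X : 𝒜, (tensorRight X).CommShift ℤ]
    [∀ X : 𝒜, (tensorLeft X).IsTriangulated] [∀ X : 𝒜, (tensorRight X).IsTriangulated]
    (P₁ Q₁ P₂ Q₂ : 𝒜) (ε₁ : P₁ ⟶ 𝟙_ 𝒜) (η₁ : 𝟙_ 𝒜 ⟶ Q₁) (δ₁ : Q₁ ⟶ P₁⟦(1 : ℤ)⟧)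
    (ε₂ : P₂ ⟶ 𝟙_ 𝒜) (η₂ : 𝟙_ 𝒜 ⟶ Q₂) (δ₂ : Q₂ ⟶ P₂⟦(1 : ℤ)⟧)
    (hT₁ : Triangle.mk ε₁ η₁ δ₁ ∈ distTriang 𝒜)
    (hT₂ : Triangle.mk ε₂ η₂ δ₂ ∈ distTriang 𝒜)
    (hP₁ : IsIso ((ε₁ ▷ P₁) ≫ (λ_ P₁).hom) ∧ IsIso ((P₁ ◁ ε₁) ≫ (ρ_ P₁).hom))
    (hP₂ : IsIso ((ε₂ ▷ P₂) ≫ (λ_ P₂).hom) ∧ IsIso ((P₂ ◁ ε₂) ≫ (ρ_ P₂).hom))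
    (hQ₁ : IsIso ((λ_ Q₁).inv ≫ (η₁ ▷ Q₁)) ∧ IsIso ((ρ_ Q₁).inv ≫ (Q₁ ◁ η₁)))
    (hQ₂ : IsIso ((λ_ Q₂).inv ≫ (η₂ ▷ Q₂)) ∧ IsIso ((ρ_ Q₂).inv ≫ (Q₂ ◁ η₂))) :
    Nonempty (P₁ ≅ P₂) ↔ Nonempty (Q₁ ≅ Q₂) := by
  have z : ∀ {P Q : 𝒜} {ε : P ⟶ 𝟙_ 𝒜} {η : 𝟙_ 𝒜 ⟶ Q} {δ : Q ⟶ P⟦(1 : ℤ)⟧},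
      Triangle.mk ε η δ ∈ distTriang 𝒜 →
      IsIso ((ε ▷ P) ≫ (λ_ P).hom) ∧ IsIso ((P ◁ ε) ≫ (ρ_ P).hom) →
      IsZero (P ⊗ Q) ∧ IsZero (Q ⊗ P) := by
    rintro P Q ε η δ hT ⟨h1, h2⟩
    exact ⟨(left_zero_iff hT P).1.2 (IsIso.of_isIso_comp_right _ (ρ_ P).hom),
      (right_zero_iff hT P).1.2 (IsIso.of_isIso_comp_right _ (λ_ P).hom)⟩
  obtain ⟨a1, b1⟩ := z hT₁ hP₁
  obtain ⟨a2, b2⟩ := z hT₂ hP₂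
  constructor
  · rintro ⟨e⟩
    have := (right_zero_iff hT₂ Q₁).2.1 (a1.of_iso (whiskerRightIso e.symm Q₁))
    have := (left_zero_iff hT₁ Q₂).2.1 (b2.of_iso (whiskerLeftIso Q₂ e))
    exact ⟨(λ_ Q₁).symm ≪≫ asIso (η₂ ▷ Q₁) ≪≫ (asIso (Q₂ ◁ η₁)).symm ≪≫ ρ_ Q₂⟩
  · rintro ⟨e⟩
    have := (left_zero_iff hT₁ P₂).1.1 (a2.of_iso (whiskerLeftIso P₂ e))
    have := (right_zero_iff hT₂ P₁).1.1 (b1.of_iso (whiskerRightIso e.symm P₁))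
    exact ⟨(λ_ P₁).symm ≪≫ (asIso (ε₂ ▷ P₁)).symm ≪≫ asIso (P₂ ◁ ε₁) ≪≫ ρ_ P₂⟩
end

section
/- Let (P₁, ε₁, Q₁, η₁) and (P₂, ε₂, Q₂, η₂) be two complementary pairs of idempotents in 𝒜, i.e., for i = 1, 2 there is a distinguished triangle Pᵢ ⟶εᵢ 𝟙 ⟶ηᵢ Qᵢ ⟶ Pᵢ⟦1⟧ with (Pᵢ, εᵢ) counital and (Qᵢ, ηᵢ) unital. Then P₁ ⊗ P₂ ≅ P₂ ⊗ P₁ if and only if Q₁ ⊗ Q₂ ≅ Q₂ ⊗ Q₁. -/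
open CategoryTheory Category Limits MonoidalCategory Pretriangulated ZeroObject

lemma aux_left_P {𝒜 : Type*} [Category 𝒜] [MonoidalCategory 𝒜]
    [HasZeroObject 𝒜] [Preadditive 𝒜] [HasShift 𝒜 ℤ]
    [∀ n : ℤ, (shiftFunctor 𝒜 n).Additive] [Pretriangulated 𝒜]
    [∀ X : 𝒜, (tensorLeft X).Additive] [∀ X : 𝒜, (tensorRight X).Additive]
    [∀ X : 𝒜, (tensorLeft X).CommShift ℤ] [∀ X : 𝒜, (tensorRight X).CommShift ℤ]
    [∀ X : 𝒜, (tensorLeft X).IsTriangulated] [∀ X : 𝒜, (tensorRight X).IsTriangulated]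
    {P Q : 𝒜} {ε : P ⟶ 𝟙_ 𝒜} {η : 𝟙_ 𝒜 ⟶ Q} {δ : Q ⟶ P⟦(1 : ℤ)⟧}
    (hT : Triangle.mk ε η δ ∈ distTriang 𝒜) (X : 𝒜) : IsZero (X ⊗ Q) ↔ IsIso (X ◁ ε) :=
  Triangle.isZero₃_iff_isIso₁ _ ((tensorLeft X).map_distinguished _ hT)

lemma aux_left_Q {𝒜 : Type*} [Category 𝒜] [MonoidalCategory 𝒜]
    [HasZeroObject 𝒜] [Preadditive 𝒜] [HasShift 𝒜 ℤ]
    [∀ n : ℤ, (shiftFunctor 𝒜 n).Additive] [Pretriangulated 𝒜]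
    [∀ X : 𝒜, (tensorLeft X).Additive] [∀ X : 𝒜, (tensorRight X).Additive]
    [∀ X : 𝒜, (tensorLeft X).CommShift ℤ] [∀ X : 𝒜, (tensorRight X).CommShift ℤ]
    [∀ X : 𝒜, (tensorLeft X).IsTriangulated] [∀ X : 𝒜, (tensorRight X).IsTriangulated]
    {P Q : 𝒜} {ε : P ⟶ 𝟙_ 𝒜} {η : 𝟙_ 𝒜 ⟶ Q} {δ : Q ⟶ P⟦(1 : ℤ)⟧}
    (hT : Triangle.mk ε η δ ∈ distTriang 𝒜) (X : 𝒜) : IsZero (X ⊗ P) ↔ IsIso (X ◁ η) :=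
  Triangle.isZero₁_iff_isIso₂ _ ((tensorLeft X).map_distinguished _ hT)

lemma aux_right_P {𝒜 : Type*} [Category 𝒜] [MonoidalCategory 𝒜]
    [HasZeroObject 𝒜] [Preadditive 𝒜] [HasShift 𝒜 ℤ]
    [∀ n : ℤ, (shiftFunctor 𝒜 n).Additive] [Pretriangulated 𝒜]
    [∀ X : 𝒜, (tensorLeft X).Additive] [∀ X : 𝒜, (tensorRight X).Additive]
    [∀ X : 𝒜, (tensorLeft X).CommShift ℤ] [∀ X : 𝒜, (tensorRight X).CommShift ℤ]
    [∀ X : 𝒜, (tensorLeft X).IsTriangulated] [∀ X : 𝒜, (tensorRight X).IsTriangulated]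
    {P Q : 𝒜} {ε : P ⟶ 𝟙_ 𝒜} {η : 𝟙_ 𝒜 ⟶ Q} {δ : Q ⟶ P⟦(1 : ℤ)⟧}
    (hT : Triangle.mk ε η δ ∈ distTriang 𝒜) (X : 𝒜) : IsZero (Q ⊗ X) ↔ IsIso (ε ▷ X) :=
  Triangle.isZero₃_iff_isIso₁ _ ((tensorRight X).map_distinguished _ hT)

lemma aux_right_Q {𝒜 : Type*} [Category 𝒜] [MonoidalCategory 𝒜]
    [HasZeroObject 𝒜] [Preadditive 𝒜] [HasShift 𝒜 ℤ]
    [∀ n : ℤ, (shiftFunctor 𝒜 n).Additive] [Pretriangulated 𝒜]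
    [∀ X : 𝒜, (tensorLeft X).Additive] [∀ X : 𝒜, (tensorRight X).Additive]
    [∀ X : 𝒜, (tensorLeft X).CommShift ℤ] [∀ X : 𝒜, (tensorRight X).CommShift ℤ]
    [∀ X : 𝒜, (tensorLeft X).IsTriangulated] [∀ X : 𝒜, (tensorRight X).IsTriangulated]
    {P Q : 𝒜} {ε : P ⟶ 𝟙_ 𝒜} {η : 𝟙_ 𝒜 ⟶ Q} {δ : Q ⟶ P⟦(1 : ℤ)⟧}
    (hT : Triangle.mk ε η δ ∈ distTriang 𝒜) (X : 𝒜) : IsZero (P ⊗ X) ↔ IsIso (η ▷ X) :=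
  Triangle.isZero₁_iff_isIso₂ _ ((tensorRight X).map_distinguished _ hT)

lemma aux_swap {𝒜 : Type*} [Category 𝒜] [MonoidalCategory 𝒜]
    [HasZeroObject 𝒜] [Preadditive 𝒜] [HasShift 𝒜 ℤ]
    [∀ n : ℤ, (shiftFunctor 𝒜 n).Additive] [Pretriangulated 𝒜]
    [∀ X : 𝒜, (tensorLeft X).Additive] [∀ X : 𝒜, (tensorRight X).Additive]
    [∀ X : 𝒜, (tensorLeft X).CommShift ℤ] [∀ X : 𝒜, (tensorRight X).CommShift ℤ]
    [∀ X : 𝒜, (tensorLeft X).IsTriangulated] [∀ X : 𝒜, (tensorRight X).IsTriangulated]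
    {P Q : 𝒜} {ε : P ⟶ 𝟙_ 𝒜} {η : 𝟙_ 𝒜 ⟶ Q} {δ : Q ⟶ P⟦(1 : ℤ)⟧}
    (hT : Triangle.mk ε η δ ∈ distTriang 𝒜)
    (hP : IsIso ((ε ▷ P) ≫ (λ_ P).hom) ∧ IsIso ((P ◁ ε) ≫ (ρ_ P).hom)) (X : 𝒜) :
    Nonempty (P ⊗ X ≅ X ⊗ P) ↔ Nonempty (Q ⊗ X ≅ X ⊗ Q) := by
  have hPQ : IsZero (P ⊗ Q) := by
    rw [aux_left_P hT]
    have := hP.2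
    exact IsIso.of_isIso_comp_right _ (ρ_ P).hom
  have hQP : IsZero (Q ⊗ P) := by
    rw [aux_right_P hT]
    have := hP.1
    exact IsIso.of_isIso_comp_right _ (λ_ P).hom
  have zl : ∀ (A : 𝒜) {B : 𝒜}, IsZero B → IsZero (A ⊗ B) :=
    fun A _ h => (tensorLeft A).map_isZero h
  have zr : ∀ (A : 𝒜) {B : 𝒜}, IsZero B → IsZero (B ⊗ A) :=
    fun A _ h => (tensorRight A).map_isZero h
  constructor
  · rintro ⟨e⟩
    have h1 : IsZero (P ⊗ (X ⊗ Q)) :=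
      (zl X hPQ).of_iso ((α_ P X Q).symm ≪≫ whiskerRightIso e Q ≪≫ α_ X P Q)
    have h2 : IsZero ((Q ⊗ X) ⊗ P) :=
      (zr X hQP).of_iso (α_ Q X P ≪≫ whiskerLeftIso Q e.symm ≪≫ (α_ Q P X).symm)
    rw [aux_right_Q hT] at h1
    rw [aux_left_Q hT] at h2
    exact ⟨(ρ_ _).symm ≪≫ asIso ((Q ⊗ X) ◁ η) ≪≫ α_ Q X Q ≪≫
      (asIso (η ▷ (X ⊗ Q))).symm ≪≫ λ_ _⟩
  · rintro ⟨e⟩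
    have h1 : IsZero ((P ⊗ X) ⊗ Q) :=
      (zr X hPQ).of_iso (α_ P X Q ≪≫ whiskerLeftIso P e.symm ≪≫ (α_ P Q X).symm)
    have h2 : IsZero (Q ⊗ (X ⊗ P)) :=
      (zl X hQP).of_iso ((α_ Q X P).symm ≪≫ whiskerRightIso e P ≪≫ α_ X Q P)
    rw [aux_left_P hT] at h1
    rw [aux_right_P hT] at h2
    exact ⟨(ρ_ _).symm ≪≫ (asIso ((P ⊗ X) ◁ ε)).symm ≪≫ α_ P X P ≪≫
      asIso (ε ▷ (X ⊗ P)) ≪≫ λ_ _⟩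

/-- Lemma (properties of complementary idempotents, part (5)): given two complementary pairs
of idempotents `(Pᵢ, εᵢ, Qᵢ, ηᵢ)`, we have `P₁ ⊗ P₂ ≅ P₂ ⊗ P₁` iff `Q₁ ⊗ Q₂ ≅ Q₂ ⊗ Q₁`. -/
theorem complementary_idempotents_commute_iff {𝒜 : Type*} [Category 𝒜] [MonoidalCategory 𝒜]
    [HasZeroObject 𝒜] [Preadditive 𝒜] [HasShift 𝒜 ℤ]
    [∀ n : ℤ, (shiftFunctor 𝒜 n).Additive] [Pretriangulated 𝒜]
    [∀ X : 𝒜, (tensorLeft X).Additive] [∀ X : 𝒜, (tensorRight X).Additive]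
    [∀ X : 𝒜, (tensorLeft X).CommShift ℤ] [∀ X : 𝒜, (tensorRight X).CommShift ℤ]
    [∀ X : 𝒜, (tensorLeft X).IsTriangulated] [∀ X : 𝒜, (tensorRight X).IsTriangulated]
    (P₁ Q₁ P₂ Q₂ : 𝒜) (ε₁ : P₁ ⟶ 𝟙_ 𝒜) (η₁ : 𝟙_ 𝒜 ⟶ Q₁) (δ₁ : Q₁ ⟶ P₁⟦(1 : ℤ)⟧)
    (ε₂ : P₂ ⟶ 𝟙_ 𝒜) (η₂ : 𝟙_ 𝒜 ⟶ Q₂) (δ₂ : Q₂ ⟶ P₂⟦(1 : ℤ)⟧)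
    (hT₁ : Triangle.mk ε₁ η₁ δ₁ ∈ distTriang 𝒜)
    (hT₂ : Triangle.mk ε₂ η₂ δ₂ ∈ distTriang 𝒜)
    (hP₁ : IsIso ((ε₁ ▷ P₁) ≫ (λ_ P₁).hom) ∧ IsIso ((P₁ ◁ ε₁) ≫ (ρ_ P₁).hom))
    (hP₂ : IsIso ((ε₂ ▷ P₂) ≫ (λ_ P₂).hom) ∧ IsIso ((P₂ ◁ ε₂) ≫ (ρ_ P₂).hom))
    (hQ₁ : IsIso ((λ_ Q₁).inv ≫ (η₁ ▷ Q₁)) ∧ IsIso ((ρ_ Q₁).inv ≫ (Q₁ ◁ η₁)))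
    (hQ₂ : IsIso ((λ_ Q₂).inv ≫ (η₂ ▷ Q₂)) ∧ IsIso ((ρ_ Q₂).inv ≫ (Q₂ ◁ η₂))) :
    Nonempty (P₁ ⊗ P₂ ≅ P₂ ⊗ P₁) ↔ Nonempty (Q₁ ⊗ Q₂ ≅ Q₂ ⊗ Q₁) := by
  have a := aux_swap hT₁ hP₁ P₂
  have b := aux_swap hT₂ hP₂ Q₁
  exact a.trans (⟨fun ⟨e⟩ => ⟨e.symm⟩, fun ⟨e⟩ => ⟨e.symm⟩⟩ : _ ↔ Nonempty (P₂ ⊗ Q₁ ≅ Q₁ ⊗ P₂)) |>.trans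
    (b.trans ⟨fun ⟨e⟩ => ⟨e.symm⟩, fun ⟨e⟩ => ⟨e.symm⟩⟩)
end

section
/- Let (P₁, ε₁) and (P₂, ε₂) be counital idempotents in 𝒜. The following are equivalent: (1) there exists a morphism θ : P₁ ⟶ P₂ with θ ≫ ε₂ = ε₁ (equivalently, P₁ is a retract of X ⊗ P₂ for some object X); (2) P₁ ⊗ P₂ ≅ P₁; (3) P₂ ⊗ P₁ ≅ P₁. -/
open CategoryTheory Category Limits MonoidalCategory Pretriangulated ZeroObject

section Helpers

variable {𝒞 : Type*} [Category 𝒞] [MonoidalCategory 𝒞]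

/-- If `X` is a retract of `Z ⊗ P`, then `X ⊗ P ⟶ X` is an isomorphism. -/
lemma isIso_right_of_retract {P : 𝒞} (ε : P ⟶ 𝟙_ 𝒞) (hP : IsIso ((P ◁ ε) ≫ (ρ_ P).hom))
    {X Z : 𝒞} (i : X ⟶ Z ⊗ P) (r : Z ⊗ P ⟶ X) (h : i ≫ r = 𝟙 X) :
    IsIso ((X ◁ ε) ≫ (ρ_ X).hom) := by
  have nat : ∀ {A B : 𝒞} (g : A ⟶ B),
      g ▷ P ≫ (B ◁ ε) ≫ (ρ_ B).hom = ((A ◁ ε) ≫ (ρ_ A).hom) ≫ g := by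
    intro A B g
    rw [← whisker_exchange_assoc, rightUnitor_naturality, assoc]
  have hY : IsIso (((Z ⊗ P) ◁ ε) ≫ (ρ_ (Z ⊗ P)).hom) := by
    have e : ((Z ⊗ P) ◁ ε) ≫ (ρ_ (Z ⊗ P)).hom
        = (α_ Z P P).hom ≫ Z ◁ ((P ◁ ε) ≫ (ρ_ P).hom) := by
      simp
    rw [e]
    infer_instance
  refine ⟨i ≫ inv (((Z ⊗ P) ◁ ε) ≫ (ρ_ (Z ⊗ P)).hom) ≫ r ▷ P, ?_, ?_⟩
  · rw [← assoc, ← nat i]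
    simp only [assoc]
    rw [← assoc ((Z ⊗ P) ◁ ε), IsIso.hom_inv_id_assoc, ← comp_whiskerRight, h, id_whiskerRight]
  · simp only [assoc]
    rw [nat r, IsIso.inv_hom_id_assoc, h]

/-- If `X` is a retract of `P ⊗ Z`, then `P ⊗ X ⟶ X` is an isomorphism. -/
lemma isIso_left_of_retract {P : 𝒞} (ε : P ⟶ 𝟙_ 𝒞) (hP : IsIso ((ε ▷ P) ≫ (λ_ P).hom))
    {X Z : 𝒞} (i : X ⟶ P ⊗ Z) (r : P ⊗ Z ⟶ X) (h : i ≫ r = 𝟙 X) :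
    IsIso ((ε ▷ X) ≫ (λ_ X).hom) := by
  have nat : ∀ {A B : 𝒞} (g : A ⟶ B),
      P ◁ g ≫ (ε ▷ B) ≫ (λ_ B).hom = ((ε ▷ A) ≫ (λ_ A).hom) ≫ g := by
    intro A B g
    rw [whisker_exchange_assoc, leftUnitor_naturality, assoc]
  have hY : IsIso ((ε ▷ (P ⊗ Z)) ≫ (λ_ (P ⊗ Z)).hom) := by
    have e : (ε ▷ (P ⊗ Z)) ≫ (λ_ (P ⊗ Z)).hom
        = (α_ P P Z).inv ≫ ((ε ▷ P) ≫ (λ_ P).hom) ▷ Z := by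
      simp
    rw [e]
    infer_instance
  refine ⟨i ≫ inv ((ε ▷ (P ⊗ Z)) ≫ (λ_ (P ⊗ Z)).hom) ≫ P ◁ r, ?_, ?_⟩
  · rw [← assoc, ← nat i]
    simp only [assoc]
    rw [← assoc (ε ▷ (P ⊗ Z)), IsIso.hom_inv_id_assoc, ← whiskerLeft_comp, h, whiskerLeft_id]
  · simp only [assoc]
    rw [nat r, IsIso.inv_hom_id_assoc, h]

end Helpers

/-- Theorem (partial order on counital idempotents): for counital idempotents `(P₁, ε₁)` and
`(P₂, ε₂)` the following are equivalent: (1) there is `θ : P₁ ⟶ P₂` with `θ ≫ ε₂ = ε₁`;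
(2) `P₁ ⊗ P₂ ≅ P₁`; (3) `P₂ ⊗ P₁ ≅ P₁`. -/
theorem counital_idempotent_order_tfae {𝒜 : Type*} [Category 𝒜] [MonoidalCategory 𝒜]
    [HasZeroObject 𝒜] [Preadditive 𝒜] [HasShift 𝒜 ℤ]
    [∀ n : ℤ, (shiftFunctor 𝒜 n).Additive] [Pretriangulated 𝒜]
    [∀ X : 𝒜, (tensorLeft X).Additive] [∀ X : 𝒜, (tensorRight X).Additive]
    [∀ X : 𝒜, (tensorLeft X).CommShift ℤ] [∀ X : 𝒜, (tensorRight X).CommShift ℤ]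
    [∀ X : 𝒜, (tensorLeft X).IsTriangulated] [∀ X : 𝒜, (tensorRight X).IsTriangulated]
    (P₁ P₂ : 𝒜) (ε₁ : P₁ ⟶ 𝟙_ 𝒜) (ε₂ : P₂ ⟶ 𝟙_ 𝒜)
    (hP₁ : IsIso ((ε₁ ▷ P₁) ≫ (λ_ P₁).hom) ∧ IsIso ((P₁ ◁ ε₁) ≫ (ρ_ P₁).hom))
    (hP₂ : IsIso ((ε₂ ▷ P₂) ≫ (λ_ P₂).hom) ∧ IsIso ((P₂ ◁ ε₂) ≫ (ρ_ P₂).hom)) :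
    List.TFAE [
      ∃ θ : P₁ ⟶ P₂, θ ≫ ε₂ = ε₁,
      Nonempty (P₁ ⊗ P₂ ≅ P₁),
      Nonempty (P₂ ⊗ P₁ ≅ P₁)] := by
  obtain ⟨h1l, h1r⟩ := hP₁
  obtain ⟨h2l, h2r⟩ := hP₂
  tfae_have 1 → 2 := by
    rintro ⟨θ, hθ⟩
    have := isIso_right_of_retract ε₂ h2r
      (inv ((P₁ ◁ ε₁) ≫ (ρ_ P₁).hom) ≫ P₁ ◁ θ) ((P₁ ◁ ε₂) ≫ (ρ_ P₁).hom) (by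
        rw [assoc, ← whiskerLeft_comp_assoc, hθ, IsIso.inv_hom_id])
    exact ⟨asIso ((P₁ ◁ ε₂) ≫ (ρ_ P₁).hom)⟩
  tfae_have 1 → 3 := by
    rintro ⟨θ, hθ⟩
    have := isIso_left_of_retract ε₂ h2l
      (inv ((ε₁ ▷ P₁) ≫ (λ_ P₁).hom) ≫ θ ▷ P₁) ((ε₂ ▷ P₁) ≫ (λ_ P₁).hom) (by
        rw [assoc, ← comp_whiskerRight_assoc, hθ, IsIso.inv_hom_id])
    exact ⟨asIso ((ε₂ ▷ P₁) ≫ (λ_ P₁).hom)⟩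
  tfae_have 2 → 1 := by
    rintro ⟨e⟩
    have := isIso_right_of_retract ε₂ h2r e.inv e.hom e.inv_hom_id
    refine ⟨inv ((P₁ ◁ ε₂) ≫ (ρ_ P₁).hom) ≫ (ε₁ ▷ P₂) ≫ (λ_ P₂).hom, ?_⟩
    rw [assoc, IsIso.inv_comp_eq, assoc, assoc, ← leftUnitor_naturality,
      ← whisker_exchange_assoc, ← rightUnitor_naturality, unitors_equal]
  tfae_have 3 → 1 := by
    rintro ⟨e⟩
    have := isIso_left_of_retract ε₂ h2l e.inv e.hom e.inv_hom_id
    refine ⟨inv ((ε₂ ▷ P₁) ≫ (λ_ P₁).hom) ≫ (P₂ ◁ ε₁) ≫ (ρ_ P₂).hom, ?_⟩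
    rw [assoc, IsIso.inv_comp_eq, assoc, assoc, ← leftUnitor_naturality,
      ← whisker_exchange_assoc, ← rightUnitor_naturality, unitors_equal]
  tfae_finish
end

section
/- Let (P, ε) be a counital idempotent in 𝒜. For an object M of 𝒜 the following are equivalent: (1) M is a retract of some object M' satisfying M' ⊗ P ≅ M'; (2) the morphism (M ◁ ε) ≫ ρ_M : M ⊗ P ⟶ M is an isomorphism; (3) M ⊗ P ≅ M. -/
open CategoryTheory Category Limits MonoidalCategory Pretriangulated ZeroObject

/-- Lemma (characterization of `im P`): for a counital idempotent `(P, ε)` and an object `M`,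
the following are equivalent: (1) `M` is a retract of an object `M'` with `M' ⊗ P ≅ M'`;
(2) `(M ◁ ε) ≫ ρ_M : M ⊗ P ⟶ M` is an isomorphism; (3) `M ⊗ P ≅ M`. -/
theorem im_counital_idempotent_tfae {𝒜 : Type*} [Category 𝒜] [MonoidalCategory 𝒜]
    [HasZeroObject 𝒜] [Preadditive 𝒜] [HasShift 𝒜 ℤ]
    [∀ n : ℤ, (shiftFunctor 𝒜 n).Additive] [Pretriangulated 𝒜]
    [∀ X : 𝒜, (tensorLeft X).Additive] [∀ X : 𝒜, (tensorRight X).Additive]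
    [∀ X : 𝒜, (tensorLeft X).CommShift ℤ] [∀ X : 𝒜, (tensorRight X).CommShift ℤ]
    [∀ X : 𝒜, (tensorLeft X).IsTriangulated] [∀ X : 𝒜, (tensorRight X).IsTriangulated]
    (P : 𝒜) (ε : P ⟶ 𝟙_ 𝒜)
    (hP : IsIso ((ε ▷ P) ≫ (λ_ P).hom) ∧ IsIso ((P ◁ ε) ≫ (ρ_ P).hom))
    (M : 𝒜) :
    List.TFAE [
      ∃ (M' : 𝒜) (_ : Nonempty (M' ⊗ P ≅ M')) (i : M ⟶ M') (r : M' ⟶ M), i ≫ r = 𝟙 M,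
      IsIso ((M ◁ ε) ≫ (ρ_ M).hom),
      Nonempty (M ⊗ P ≅ M)] := by
  have nat : ∀ {X Y : 𝒜} (f : X ⟶ Y),
      f ▷ P ≫ ((Y ◁ ε) ≫ (ρ_ Y).hom) = ((X ◁ ε) ≫ (ρ_ X).hom) ≫ f := by
    intro X Y f
    rw [← Category.assoc, ← whisker_exchange, Category.assoc, rightUnitor_naturality,
      Category.assoc]
  have hP2 := hP.2
  have free : ∀ X : 𝒜, IsIso (((X ⊗ P) ◁ ε) ≫ (ρ_ (X ⊗ P)).hom) := by
    intro X
    have h : ((X ⊗ P) ◁ ε) ≫ (ρ_ (X ⊗ P)).hom =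
        (α_ X P P).hom ≫ X ◁ ((P ◁ ε) ≫ (ρ_ P).hom) := by
      simp
    rw [h]
    infer_instance
  tfae_have 1 → 2 := by
    rintro ⟨M', ⟨e⟩, i, r, hir⟩
    have h1 := free M'
    have h2 : IsIso ((M' ◁ ε) ≫ (ρ_ M').hom) := by
      have h3 : (M' ◁ ε) ≫ (ρ_ M').hom =
          e.inv ▷ P ≫ (((M' ⊗ P) ◁ ε) ≫ (ρ_ (M' ⊗ P)).hom) ≫ e.hom := by
        rw [← nat e.hom, ← Category.assoc, ← comp_whiskerRight, e.inv_hom_id,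
          id_whiskerRight, Category.id_comp]
      rw [h3]
      infer_instance
    refine ⟨i ≫ inv ((M' ◁ ε) ≫ (ρ_ M').hom) ≫ r ▷ P, ?_, ?_⟩
    · rw [← Category.assoc, ← nat i, Category.assoc, IsIso.hom_inv_id_assoc,
        ← comp_whiskerRight, hir, id_whiskerRight]
    · rw [Category.assoc, Category.assoc, nat r, IsIso.inv_hom_id_assoc, hir]
  tfae_have 2 → 3 := fun h => ⟨@asIso _ _ _ _ _ h⟩
  tfae_have 3 → 1 := fun h => ⟨M, h, 𝟙 M, 𝟙 M, Category.id_comp _⟩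
  tfae_finish
end

section
/- Let (P, ε) be a counital idempotent in 𝒜, and write im(P) for the class of objects M with M ⊗ P ≅ M and ker(P) for the class of objects N with N ⊗ P ≅ 0. Then: (a) Hom(M, N) = 0 whenever M ∈ im(P) and N ∈ ker(P); (b) an object M belongs to im(P) if and only if Hom(M, N) = 0 for all N ∈ ker(P); (c) an object N belongs to ker(P) if and only if Hom(M, N) = 0 for all M ∈ im(P). In other words, im(P)ᐩ = ker(P) and ᐩker(P) = im(P) (im(P) and ker(P) are semiorthogonal complements). -/
open CategoryTheory Category Limits MonoidalCategory Pretriangulated ZeroObject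

/-- Lemma (semiorthogonality of `im P` and `ker P`): for a counital idempotent `(P, ε)`,
(a) every morphism from an object of `im P` to an object of `ker P` vanishes;
(b) `M ∈ im P` iff `Hom(M, N) = 0` for all `N ∈ ker P`;
(c) `N ∈ ker P` iff `Hom(M, N) = 0` for all `M ∈ im P`. -/
theorem im_ker_semiorthogonal {𝒜 : Type*} [Category 𝒜] [MonoidalCategory 𝒜]
    [HasZeroObject 𝒜] [Preadditive 𝒜] [HasShift 𝒜 ℤ]
    [∀ n : ℤ, (shiftFunctor 𝒜 n).Additive] [Pretriangulated 𝒜]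
    [∀ X : 𝒜, (tensorLeft X).Additive] [∀ X : 𝒜, (tensorRight X).Additive]
    [∀ X : 𝒜, (tensorLeft X).CommShift ℤ] [∀ X : 𝒜, (tensorRight X).CommShift ℤ]
    [∀ X : 𝒜, (tensorLeft X).IsTriangulated] [∀ X : 𝒜, (tensorRight X).IsTriangulated]
    (P : 𝒜) (ε : P ⟶ 𝟙_ 𝒜)
    (hP : IsIso ((ε ▷ P) ≫ (λ_ P).hom) ∧ IsIso ((P ◁ ε) ≫ (ρ_ P).hom)) :
    (∀ M N : 𝒜, Nonempty (M ⊗ P ≅ M) → Nonempty (N ⊗ P ≅ 0) →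
        ∀ f : M ⟶ N, f = 0) ∧
    (∀ M : 𝒜, Nonempty (M ⊗ P ≅ M) ↔
        ∀ N : 𝒜, Nonempty (N ⊗ P ≅ 0) → ∀ f : M ⟶ N, f = 0) ∧
    (∀ N : 𝒜, Nonempty (N ⊗ P ≅ 0) ↔
        ∀ M : 𝒜, Nonempty (M ⊗ P ≅ M) → ∀ f : M ⟶ N, f = 0) := by
  obtain ⟨hL, hR⟩ := hP
  let e : ∀ M : 𝒜, M ⊗ P ⟶ M := fun M => (M ◁ ε) ≫ (ρ_ M).hom
  have nat : ∀ {M N : 𝒜} (f : M ⟶ N), e M ≫ f = (f ▷ P) ≫ e N := by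
    intro M N f
    simp only [e, assoc, ← rightUnitor_naturality]
    rw [whisker_exchange_assoc]
  have eMP : ∀ M : 𝒜, IsIso (e (M ⊗ P)) := by
    intro M
    have h : e (M ⊗ P) = (α_ M P P).hom ≫ (M ◁ ((P ◁ ε) ≫ (ρ_ P).hom)) := by
      simp [e]
    rw [h]
    infer_instance
  have eP : ∀ M : 𝒜, IsIso (e M ▷ P) := by
    intro M
    have h : e M ▷ P = (α_ M P P).hom ≫ (M ◁ ((ε ▷ P) ≫ (λ_ P).hom)) := by
      simp [e]
    rw [h]
    infer_instance
  have im : ∀ M : 𝒜, Nonempty (M ⊗ P ≅ M) → IsIso (e M) := by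
    rintro M ⟨i⟩
    have := eMP M
    have h := nat i.hom
    have h2 : e M = inv (i.hom ▷ P) ≫ e (M ⊗ P) ≫ i.hom := by
      rw [h]; simp
    rw [h2]
    infer_instance
  have a : ∀ M N : 𝒜, Nonempty (M ⊗ P ≅ M) → Nonempty (N ⊗ P ≅ 0) →
        ∀ f : M ⟶ N, f = 0 := by
    rintro M N hM ⟨j⟩ f
    have := im M hM
    have hz : IsZero (N ⊗ P) := (isZero_zero 𝒜).of_iso j
    rw [← cancel_epi (e M), nat f, hz.eq_of_src (e N) 0]
    simp
  refine ⟨a, fun M => ⟨fun hM N hN f => a M N hM hN f, fun H => ?_⟩,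
    fun N => ⟨fun hN M hM f => a M N hM hN f, fun H => ?_⟩⟩
  · obtain ⟨C, g, h, hT⟩ := distinguished_cocone_triangle (e M)
    have hT2 := (tensorRight P).map_distinguished _ hT
    have i1 : IsIso (e M ▷ P) := eP M
    have hz : IsZero (C ⊗ P) := Triangle.isZero₃_of_isIso₁ _ hT2 i1
    have hg : g = 0 := H C ⟨hz.iso (isZero_zero 𝒜)⟩ g
    have hex : ∃ s : M ⟶ M ⊗ P, 𝟙 M = s ≫ e M := by
      have h0 : 𝟙 M ≫ g = 0 := by rw [hg, comp_zero]
      exact Triangle.coyoneda_exact₂ _ hT (𝟙 M) h0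
    obtain ⟨s, hs⟩ := hex
    have hs2 : (s ▷ P) ≫ (e M ▷ P) = 𝟙 _ := by
      rw [← comp_whiskerRight, ← hs, id_whiskerRight]
    have i2 : IsIso (s ▷ P) := by
      have : s ▷ P = inv (e M ▷ P) := by
        rw [← cancel_mono (e M ▷ P), hs2, IsIso.inv_hom_id]
      rw [this]; infer_instance
    have := eMP M
    have i3 : IsIso (e M ≫ s) := by rw [nat s]; infer_instance
    have m : Mono (e M) := mono_of_mono (e M) s
    refine ⟨⟨e M, s, ?_, hs.symm⟩⟩
    rw [← cancel_mono (e M), assoc, ← hs, comp_id, id_comp]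
  · have := eMP N
    have h0 : e N = 0 := H (N ⊗ P) ⟨asIso (e (N ⊗ P))⟩ (e N)
    have i1 := eP N
    have h1 : e N ▷ P = 0 := by
      rw [h0]; exact (tensorRight P).map_zero _ _
    have hz : IsZero (N ⊗ P) := by
      rw [IsZero.iff_id_eq_zero, ← IsIso.inv_hom_id (e N ▷ P)]
      conv_lhs => rw [← comp_id (inv (e N ▷ P) ≫ e N ▷ P)]
      simp [h1]
    exact ⟨hz.iso (isZero_zero 𝒜)⟩
end

section
/- Let (P, ε) be a counital idempotent in 𝒜, and let M, N be objects of 𝒜 with M ⊗ P ≅ M. Then post-composition with the morphism (N ◁ ε) ≫ ρ_N : N ⊗ P ⟶ N induces a bijection (indeed an isomorphism of abelian groups) Hom(M, N ⊗ P) ⟶ Hom(M, N). -/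
open CategoryTheory Category Limits MonoidalCategory Pretriangulated ZeroObject

/-- Proposition (semiorthogonality): for a counital idempotent `(P, ε)` and objects `M, N`
with `M ⊗ P ≅ M`, post-composition with `(N ◁ ε) ≫ ρ_N : N ⊗ P ⟶ N` gives a bijection
`Hom(M, N ⊗ P) ⟶ Hom(M, N)`. -/
theorem postcompose_counit_bijective {𝒜 : Type*} [Category 𝒜] [MonoidalCategory 𝒜]
    [HasZeroObject 𝒜] [Preadditive 𝒜] [HasShift 𝒜 ℤ]
    [∀ n : ℤ, (shiftFunctor 𝒜 n).Additive] [Pretriangulated 𝒜]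
    [∀ X : 𝒜, (tensorLeft X).Additive] [∀ X : 𝒜, (tensorRight X).Additive]
    [∀ X : 𝒜, (tensorLeft X).CommShift ℤ] [∀ X : 𝒜, (tensorRight X).CommShift ℤ]
    [∀ X : 𝒜, (tensorLeft X).IsTriangulated] [∀ X : 𝒜, (tensorRight X).IsTriangulated]
    (P : 𝒜) (ε : P ⟶ 𝟙_ 𝒜)
    (hP : IsIso ((ε ▷ P) ≫ (λ_ P).hom) ∧ IsIso ((P ◁ ε) ≫ (ρ_ P).hom))
    (M N : 𝒜) (hM : Nonempty (M ⊗ P ≅ M)) :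
    Function.Bijective (fun f : M ⟶ N ⊗ P => f ≫ ((N ◁ ε) ≫ (ρ_ N).hom)) := by
  obtain ⟨h1, h2⟩ := hP
  obtain ⟨e⟩ := hM
  -- naturality of the counit `X ⊗ P ⟶ X`
  have nat : ∀ {X Y : 𝒜} (f : X ⟶ Y),
      (f ▷ P) ≫ ((Y ◁ ε) ≫ (ρ_ Y).hom) = ((X ◁ ε) ≫ (ρ_ X).hom) ≫ f := by
    intro X Y f
    rw [← Category.assoc, ← whisker_exchange, Category.assoc, Category.assoc,
      rightUnitor_naturality]
  -- the counit is an isomorphism at `X ⊗ P`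
  have isoXP : ∀ X : 𝒜, IsIso (((X ⊗ P) ◁ ε) ≫ (ρ_ (X ⊗ P)).hom) := by
    intro X
    have : ((X ⊗ P) ◁ ε) ≫ (ρ_ (X ⊗ P)).hom
        = (α_ X P P).hom ≫ (X ◁ ((P ◁ ε) ≫ (ρ_ P).hom)) := by
      simp
    rw [this]
    infer_instance
  -- the counit becomes an isomorphism after tensoring with `P`
  have isoR : IsIso (((N ◁ ε) ≫ (ρ_ N).hom) ▷ P) := by
    have : ((N ◁ ε) ≫ (ρ_ N).hom) ▷ P
        = (α_ N P P).hom ≫ (N ◁ ((ε ▷ P) ≫ (λ_ P).hom)) := by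
      simp
    rw [this]
    infer_instance
  have isoM : IsIso ((M ◁ ε) ≫ (ρ_ M).hom) := by
    have h := isoXP M
    have : (M ◁ ε) ≫ (ρ_ M).hom
        = (e.inv ▷ P) ≫ (((M ⊗ P) ◁ ε) ≫ (ρ_ (M ⊗ P)).hom) ≫ e.hom := by
      rw [← Category.assoc, nat, Category.assoc, e.inv_hom_id, Category.comp_id]
    rw [this]
    infer_instance
  constructor
  · intro f f' hf
    have hf' : f ≫ ((N ◁ ε) ≫ (ρ_ N).hom) = f' ≫ ((N ◁ ε) ≫ (ρ_ N).hom) := hf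
    have h3 : f ▷ P = f' ▷ P := by
      rw [← cancel_mono (((N ◁ ε) ≫ (ρ_ N).hom) ▷ P), ← comp_whiskerRight, hf',
        comp_whiskerRight]
    rw [← cancel_epi ((M ◁ ε) ≫ (ρ_ M).hom), ← nat, ← nat, h3]
  · intro g
    refine ⟨inv ((M ◁ ε) ≫ (ρ_ M).hom) ≫ (g ▷ P), ?_⟩
    change (inv ((M ◁ ε) ≫ (ρ_ M).hom) ≫ (g ▷ P)) ≫ ((N ◁ ε) ≫ (ρ_ N).hom) = g
    rw [Category.assoc, nat, IsIso.inv_hom_id_assoc]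
end

section
/- Let (P₁, ε₁) and (P₂, ε₂) be counital idempotents in 𝒜 with P₁ ≤ P₂, i.e., P₁ ⊗ P₂ ≅ P₁. Then there exists exactly one morphism θ : P₁ ⟶ P₂ satisfying θ ≫ ε₂ = ε₁. -/
open CategoryTheory Category Limits MonoidalCategory Pretriangulated ZeroObject

/-- Corollary (canonicity): if `(P₁, ε₁)` and `(P₂, ε₂)` are counital idempotents with
`P₁ ≤ P₂` (i.e. `P₁ ⊗ P₂ ≅ P₁`), then there is exactly one morphism `θ : P₁ ⟶ P₂` with
`θ ≫ ε₂ = ε₁`. -/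
theorem counital_idempotent_unique_comparison {𝒜 : Type*} [Category 𝒜] [MonoidalCategory 𝒜]
    [HasZeroObject 𝒜] [Preadditive 𝒜] [HasShift 𝒜 ℤ]
    [∀ n : ℤ, (shiftFunctor 𝒜 n).Additive] [Pretriangulated 𝒜]
    [∀ X : 𝒜, (tensorLeft X).Additive] [∀ X : 𝒜, (tensorRight X).Additive]
    [∀ X : 𝒜, (tensorLeft X).CommShift ℤ] [∀ X : 𝒜, (tensorRight X).CommShift ℤ]
    [∀ X : 𝒜, (tensorLeft X).IsTriangulated] [∀ X : 𝒜, (tensorRight X).IsTriangulated]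
    (P₁ P₂ : 𝒜) (ε₁ : P₁ ⟶ 𝟙_ 𝒜) (ε₂ : P₂ ⟶ 𝟙_ 𝒜)
    (hP₁ : IsIso ((ε₁ ▷ P₁) ≫ (λ_ P₁).hom) ∧ IsIso ((P₁ ◁ ε₁) ≫ (ρ_ P₁).hom))
    (hP₂ : IsIso ((ε₂ ▷ P₂) ≫ (λ_ P₂).hom) ∧ IsIso ((P₂ ◁ ε₂) ≫ (ρ_ P₂).hom))
    (hle : Nonempty (P₁ ⊗ P₂ ≅ P₁)) :
    ∃! θ : P₁ ⟶ P₂, θ ≫ ε₂ = ε₁ := by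
  obtain ⟨i⟩ := hle
  have h2 : IsIso (P₂ ◁ ε₂) := by
    have := hP₂.2
    exact IsIso.of_isIso_comp_right (P₂ ◁ ε₂) (ρ_ P₂).hom
  have h12 : IsIso ((P₁ ⊗ P₂) ◁ ε₂) := by
    rw [tensor_whiskerLeft]
    infer_instance
  have h : IsIso (P₁ ◁ ε₂) := by
    have e : P₁ ◁ ε₂ = (i.inv ▷ P₂) ≫ ((P₁ ⊗ P₂) ◁ ε₂) ≫ (i.hom ▷ 𝟙_ 𝒜) := by
      rw [whisker_exchange, ← comp_whiskerRight_assoc, i.inv_hom_id, id_whiskerRight, id_comp]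
    rw [e]
    infer_instance
  have h1 := hP₁.1
  refine ⟨(ρ_ P₁).inv ≫ inv (P₁ ◁ ε₂) ≫ (ε₁ ▷ P₂) ≫ (λ_ P₂).hom, ?_, ?_⟩
  · simp only [assoc]
    rw [← leftUnitor_naturality, ← whisker_exchange_assoc, IsIso.inv_hom_id_assoc,
      unitors_equal, rightUnitor_naturality, Iso.inv_hom_id_assoc]
  · have key : ∀ f : P₁ ⟶ P₂, f ≫ ε₂ = ε₁ →
        ((ε₁ ▷ P₁) ≫ (λ_ P₁).hom) ≫ f =
          (P₁ ◁ ε₁) ≫ inv (P₁ ◁ ε₂) ≫ (ε₁ ▷ P₂) ≫ (λ_ P₂).hom := by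
      intro f hf
      have e : P₁ ◁ ε₁ = P₁ ◁ f ≫ P₁ ◁ ε₂ := by rw [← whiskerLeft_comp, hf]
      rw [e, assoc, assoc, IsIso.hom_inv_id_assoc,
        ← leftUnitor_naturality, whisker_exchange_assoc]
    intro f hf
    rw [← cancel_epi ((ε₁ ▷ P₁) ≫ (λ_ P₁).hom), key f hf]
    refine (key _ ?_).symm
    simp only [assoc]
    rw [← leftUnitor_naturality, ← whisker_exchange_assoc, IsIso.inv_hom_id_assoc,
      unitors_equal, rightUnitor_naturality, Iso.inv_hom_id_assoc]
end

section
/- The following identity of integers holds: Σ_{v=0}^{s} (s+1−v)·l_v − Σ_{u=0}^{r} (r+1−u)·k_u = C(N+1, 2) + Σ_{u=0}^{r} (r−u)·n_u + Σ_{0≤u≤u'≤r} k_u·n_{u'}, where C(N+1,2) = (N+1)N/2 is the binomial coefficient. -/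
open Finset

theorem weight_succ (f : ℕ → ℤ) (q : ℕ) (c : ℤ) :
    ∑ v ∈ range (q + 1), (c + 1 - (v : ℤ)) * f v
      = ∑ v ∈ range q, (c - (v : ℤ)) * f v + ∑ v ∈ range q, f v + (c + 1 - q) * f q := by
  rw [sum_range_succ, ← sum_add_distrib]
  congr 1
  apply sum_congr rfl
  intros
  ring

theorem block_step (l : ℕ → ℤ) (q : ℕ) (j : ℕ) (h : ∀ i < j, l (q + 1 + i) = 1) :
    ∑ v ∈ range (q + 1 + j), l v = ∑ v ∈ range q, l v + l q + j ∧
    2 * ∑ v ∈ range (q + 1 + j), (((q + 1 + j : ℕ) : ℤ) - (v : ℤ)) * l v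
      = 2 * ∑ v ∈ range q, ((q : ℤ) - (v : ℤ)) * l v
        + 2 * (j + 1) * (∑ v ∈ range q, l v + l q) + j * (j + 1) := by
  induction j with
  | zero =>
    refine ⟨by simp [sum_range_succ], ?_⟩
    have := weight_succ l q q
    push_cast
    simp only [add_zero]
    rw [this]
    ring
  | succ j ih =>
    obtain ⟨h1, h2⟩ := ih (fun i hi => h i (by omega))
    have hj := h j (by omega)
    have e : q + 1 + (j + 1) = q + 1 + j + 1 := by ring
    rw [e]
    have h3 : ∑ v ∈ range (q + 1 + j + 1), l v = ∑ v ∈ range q, l v + l q + ((j + 1 : ℕ) : ℤ) := by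
      rw [sum_range_succ, h1, hj]
      push_cast
      ring
    refine ⟨h3, ?_⟩
    have := weight_succ l (q + 1 + j) ((q + 1 + j : ℕ) : ℤ)
    rw [Nat.cast_succ (q + 1 + j), this, mul_add, mul_add, h2, h1, hj]
    push_cast
    ring


/-- Lemma (the sign rule for the expansion of the bar complex of a twisted envelope):
`σ(l₀,…,l_{s+1}) − σ(k₀,…,k_{r+1}) = C(N+1,2) + Σ_u (r−u)·n_u + Σ_{u ≤ u'} k_u·n_{u'}`,
where `σ(k₀,…,k_{r+1}) = Σ_{u=0}^{r} (r+1−u)·k_u` and `N = n₀ + ⋯ + n_r`. -/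
theorem bar_expansion_sign_rule (r : ℕ) (n : ℕ → ℕ) (k : ℕ → ℤ) (l : ℕ → ℤ)
    (p : ℕ → ℕ) (hp : ∀ u, p u = u + ∑ i ∈ range u, n i)
    (N : ℕ) (hN : N = ∑ i ∈ range (r + 1), n i)
    (s : ℕ) (hs : s = r + N)
    (hl1 : ∀ u ≤ r + 1, l (p u) = k u)
    (hl2 : ∀ v ≤ s + 1, (∀ u ≤ r + 1, p u ≠ v) → l v = 1) :
    (∑ v ∈ range (s + 1), ((s : ℤ) + 1 - (v : ℤ)) * l v)
      - (∑ u ∈ range (r + 1), ((r : ℤ) + 1 - (u : ℤ)) * k u)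
    = ((N + 1).choose 2 : ℤ)
      + (∑ u ∈ range (r + 1), ((r : ℤ) - (u : ℤ)) * (n u : ℤ))
      + (∑ u' ∈ range (r + 1), ∑ u ∈ range (u' + 1), k u * (n u' : ℤ)) := by
  have hmono : StrictMono p := by
    apply strictMono_nat_of_lt_succ
    intro u
    rw [hp, hp, sum_range_succ]
    omega
  have hpl : s + 1 = p (r + 1) := by
    rw [hp, hs, hN]
    ring
  have hps : ∀ m, p (m + 1) = p m + 1 + n m := by
    intro m
    rw [hp, hp, sum_range_succ]
    ring
  have key : ∀ m ≤ r + 1,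
      ∑ v ∈ range (p m), l v = ∑ u ∈ range m, k u + ∑ u ∈ range m, (n u : ℤ) ∧
      2 * ∑ v ∈ range (p m), ((p m : ℤ) - (v : ℤ)) * l v
        = 2 * ∑ u ∈ range m, ((m : ℤ) - (u : ℤ)) * k u
          + (∑ u ∈ range m, (n u : ℤ)) * (∑ u ∈ range m, (n u : ℤ) + 1)
          + 2 * ∑ u ∈ range m, ((m : ℤ) - 1 - (u : ℤ)) * (n u : ℤ)
          + 2 * ∑ u' ∈ range m, ∑ u ∈ range (u' + 1), k u * (n u' : ℤ) := by
    intro m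
    induction m with
    | zero => intro _; simp [hp]
    | succ m ih =>
      intro hm
      obtain ⟨h1, h2⟩ := ih (by omega)
      have hb : ∀ i < n m, l (p m + 1 + i) = 1 := by
        intro i hi
        have hle : p (m + 1) ≤ p (r + 1) := hmono.monotone hm
        have hsm := hps m
        apply hl2
        · omega
        · intro u _ hu
          rcases Nat.lt_or_ge m u with hmu | hmu
          · have : p (m + 1) ≤ p u := hmono.monotone hmu
            omega
          · have : p u ≤ p m := hmono.monotone hmu
            omega
      obtain ⟨b1, b2⟩ := block_step l (p m) (n m) hb
      rw [hl1 m (by omega), h1] at b1 b2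
      rw [hps m]
      constructor
      · rw [b1, sum_range_succ, sum_range_succ]
        ring
      · have w1 := weight_succ k m m
        have w2 := weight_succ (fun u => (n u : ℤ)) m ((m : ℤ) - 1)
        have e : ∀ u : ℕ, ((m + 1 : ℕ) : ℤ) - 1 - (u : ℤ) = (m : ℤ) - 1 + 1 - u := by
          intro u
          push_cast
          ring
        simp only [e]
        rw [b2, h2, w2, Nat.cast_succ, w1, sum_range_succ (fun u => (n u : ℤ)),
          sum_range_succ (fun u' => ∑ u ∈ range (u' + 1), k u * (n u' : ℤ)),
          ← sum_mul, sum_range_succ k]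
        ring
  have h := (key (r + 1) le_rfl).2
  rw [← hpl] at h
  have hNz : ∑ u ∈ range (r + 1), (n u : ℤ) = N := by
    rw [hN]
    push_cast
    rfl
  have hc : 2 * ((N + 1).choose 2 : ℤ) = N * (N + 1) := by
    have h2 : (N + 1).choose 2 * 2 = (N + 1) * N := by
      rw [Nat.choose_two_right]
      exact Nat.div_mul_cancel (by simpa using (Nat.even_mul_pred_self (N + 1)).two_dvd)
    have h3 : ((N + 1).choose 2 : ℤ) * 2 = (N + 1) * N := by exact_mod_cast h2
    linarith
  rw [hNz] at h
  push_cast at h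
  simp only [add_sub_cancel_right] at h
  linarith
end
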